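/- The regularization maps are compatible with the map S: Z̄^{*̄} = Z^{*} ∘ S and Z̄^{ш̄} = Z^{ш} ∘ S, where Z^{*} : (H^1, *) → ℝ[T] and Z^{ш} : (H^1, ш) → ℝ[T] are the unique ℚ-algebra homomorphisms extending Z and sending y to T, and Z̄^{*̄} : (H^1, *̄) → ℝ[T] and Z̄^{ш̄} : (H^1, ш̄) → ℝ[T] are the unique ℚ-algebra homomorphisms extending Z̄ and sending y to T. -/

import Mathlib

open scoped BigOperators

/-- The two-letter alphabet {x, y}. -/
inductive Letter : Type
  | x : Letter
  | y : Letter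
deriving DecidableEq

/-- `H = ℚ⟨x,y⟩`, the noncommutative polynomial ring over ℚ in two
indeterminates, realized as the monoid algebra of the free monoid on `{x,y}`. -/
abbrev H : Type := MonoidAlgebra ℚ (FreeMonoid Letter)

namespace H

/-- The monomial (word) of `H` corresponding to an element of the free monoid. -/
noncomputable def word (w : FreeMonoid Letter) : H := MonoidAlgebra.single w 1

/-- The generator `x`. -/
noncomputable def X : H := word (FreeMonoid.of Letter.x)

/-- The generator `y`. -/
noncomputable def Y : H := word (FreeMonoid.of Letter.y)

/-- The word `z_k = x^{k-1} y` (for `k ≥ 1`). -/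
def zW (k : ℕ) : FreeMonoid Letter :=
  FreeMonoid.ofList (List.replicate (k - 1) Letter.x ++ [Letter.y])

/-- `z_k = x^{k-1} y` as an element of `H`. -/
noncomputable def z (k : ℕ) : H := word (zW k)

/-- A list `[k₁,…,kₙ]` gives the word `z_{k₁} z_{k₂} ⋯ z_{kₙ}`. -/
def zListW (ks : List ℕ) : FreeMonoid Letter :=
  FreeMonoid.ofList (ks.flatMap fun k => List.replicate (k - 1) Letter.x ++ [Letter.y])

/-- `H¹ = ℚ + Hy` as a ℚ-submodule of `H`. -/
noncomputable def H1 : Submodule ℚ H :=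
  LinearMap.range (LinearMap.mulRight ℚ Y) ⊔ Submodule.span ℚ {1}

/-- `H⁰ = ℚ + xHy` as a ℚ-submodule of `H`. -/
noncomputable def H0 : Submodule ℚ H :=
  LinearMap.range ((LinearMap.mulRight ℚ Y).comp (LinearMap.mulLeft ℚ X)) ⊔
    Submodule.span ℚ {1}

/-- Parse a word of `H¹` into the exponent list of its `z`-decomposition:
`z_{k₁}⋯z_{kₙ} ↦ [k₁,…,kₙ]` (auxiliary accumulator version). -/
def toZAux : List Letter → ℕ → List ℕ
  | [], _ => []
  | Letter.x :: r, n => toZAux r (n + 1)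
  | Letter.y :: r, n => (n + 1) :: toZAux r 0

/-- The `z`-decomposition of a word of `H¹`. -/
def toZ (w : FreeMonoid Letter) : List ℕ := toZAux (FreeMonoid.toList w) 0

/-- The harmonic product on words of `H¹` (via `z`-decompositions):
`1 * w = w * 1 = w` and
`z_k w₁ * z_l w₂ = z_k (w₁ * z_l w₂) + z_l (z_k w₁ * w₂) + z_{k+l} (w₁ * w₂)`. -/
noncomputable def harmW : List ℕ → List ℕ → H
  | [], w => word (zListW w)
  | k :: w1, [] => word (zListW (k :: w1))
  | k :: w1, l :: w2 =>
      z k * harmW w1 (l :: w2) + z l * harmW (k :: w1) w2 + z (k + l) * harmW w1 w2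
termination_by w1 w2 => w1.length + w2.length
decreasing_by all_goals simp [Nat.lt_succ_iff] <;> omega

/-- The n-harmonic product on words of `H¹`:
`1 *̄ w = w *̄ 1 = w` and
`z_k w₁ *̄ z_l w₂ = z_k (w₁ *̄ z_l w₂) + z_l (z_k w₁ *̄ w₂) − z_{k+l} (w₁ *̄ w₂)`. -/
noncomputable def nharmW : List ℕ → List ℕ → H
  | [], w => word (zListW w)
  | k :: w1, [] => word (zListW (k :: w1))
  | k :: w1, l :: w2 =>
      z k * nharmW w1 (l :: w2) + z l * nharmW (k :: w1) w2 - z (k + l) * nharmW w1 w2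
termination_by w1 w2 => w1.length + w2.length
decreasing_by all_goals simp [Nat.lt_succ_iff] <;> omega

/-- The harmonic product `*` on `H¹`, extended ℚ-bilinearly. -/
noncomputable def harm (a b : H) : H :=
  Finsupp.sum a.coeff fun w1 c1 =>
    Finsupp.sum b.coeff fun w2 c2 => (c1 * c2) • harmW (toZ w1) (toZ w2)

/-- The n-harmonic product `*̄` on `H¹`, extended ℚ-bilinearly. -/
noncomputable def nharm (a b : H) : H :=
  Finsupp.sum a.coeff fun w1 c1 =>
    Finsupp.sum b.coeff fun w2 c2 => (c1 * c2) • nharmW (toZ w1) (toZ w2)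

/-- The letter exchange `τ(x) = y`, `τ(y) = x`. -/
def τ : Letter → Letter
  | Letter.x => Letter.y
  | Letter.y => Letter.x

/-- `δ(w) = 1` if `w` is the empty word, `0` otherwise. -/
def δ : List Letter → ℚ
  | [] => 1
  | _ :: _ => 0

/-- The shuffle product on words:
`1 ш w = w ш 1 = w` and `u₁w₁ ш u₂w₂ = u₁(w₁ ш u₂w₂) + u₂(u₁w₁ ш w₂)`. -/
noncomputable def shW : List Letter → List Letter → H
  | [], w => word (FreeMonoid.ofList w)
  | u :: w, [] => word (FreeMonoid.ofList (u :: w))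
  | u1 :: w1, u2 :: w2 =>
      word (FreeMonoid.of u1) * shW w1 (u2 :: w2) +
        word (FreeMonoid.of u2) * shW (u1 :: w1) w2
termination_by w1 w2 => w1.length + w2.length
decreasing_by all_goals simp [Nat.lt_succ_iff]

/-- The n-shuffle product on words: `1 ш̄ w = w ш̄ 1 = w` and
`u₁w₁ ш̄ u₂w₂ = u₁(w₁ ш̄ u₂w₂) + u₂(u₁w₁ ш̄ w₂) − δ(w₁)τ(u₁)u₂w₂ − δ(w₂)τ(u₂)u₁w₁`. -/
noncomputable def nshW : List Letter → List Letter → H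
  | [], w => word (FreeMonoid.ofList w)
  | u :: w, [] => word (FreeMonoid.ofList (u :: w))
  | u1 :: w1, u2 :: w2 =>
      word (FreeMonoid.of u1) * nshW w1 (u2 :: w2) +
        word (FreeMonoid.of u2) * nshW (u1 :: w1) w2 -
        δ w1 • word (FreeMonoid.ofList (τ u1 :: u2 :: w2)) -
        δ w2 • word (FreeMonoid.ofList (τ u2 :: u1 :: w1))
termination_by w1 w2 => w1.length + w2.length
decreasing_by all_goals simp [Nat.lt_succ_iff]

/-- The shuffle product `ш` on `H`, extended ℚ-bilinearly. -/
noncomputable def sh (a b : H) : H :=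
  Finsupp.sum a.coeff fun w1 c1 =>
    Finsupp.sum b.coeff fun w2 c2 =>
      (c1 * c2) • shW (FreeMonoid.toList w1) (FreeMonoid.toList w2)

/-- The n-shuffle product `ш̄` on `H`, extended ℚ-bilinearly. -/
noncomputable def nsh (a b : H) : H :=
  Finsupp.sum a.coeff fun w1 c1 =>
    Finsupp.sum b.coeff fun w2 c2 =>
      (c1 * c2) • nshW (FreeMonoid.toList w1) (FreeMonoid.toList w2)

/-- `S₁`: the ℚ-algebra endomorphism of `H` with `S₁(x) = x`, `S₁(y) = x + y`. -/
noncomputable def S1 : H →ₐ[ℚ] H :=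
  MonoidAlgebra.lift ℚ H (FreeMonoid Letter)
    (FreeMonoid.lift fun u => match u with
      | Letter.x => X
      | Letter.y => X + Y)

/-- `S₂`: the ℚ-algebra endomorphism of `H` with `S₂(x) = x`, `S₂(y) = y − x`. -/
noncomputable def S2 : H →ₐ[ℚ] H :=
  MonoidAlgebra.lift ℚ H (FreeMonoid Letter)
    (FreeMonoid.lift fun u => match u with
      | Letter.x => X
      | Letter.y => Y - X)

/-- `S` on a word: `S(1) = 1` and `S(Fy) = S₁(F)y`. -/
noncomputable def SW (w : FreeMonoid Letter) : H :=
  match (FreeMonoid.toList w).getLast? with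
  | some Letter.y =>
      S1 (word (FreeMonoid.ofList (FreeMonoid.toList w).dropLast)) * Y
  | _ => word w

/-- The ℚ-linear map `S : H¹ → H¹` with `S(1) = 1`, `S(Fy) = S₁(F)y`. -/
noncomputable def S (a : H) : H := Finsupp.sum a.coeff fun w c => c • SW w

/-- `S̃` on a word: `S̃(1) = 1` and `S̃(Fy) = S₂(F)y`. -/
noncomputable def StW (w : FreeMonoid Letter) : H :=
  match (FreeMonoid.toList w).getLast? with
  | some Letter.y =>
      S2 (word (FreeMonoid.ofList (FreeMonoid.toList w).dropLast)) * Y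
  | _ => word w

/-- The ℚ-linear map `S̃ : H¹ → H¹` with `S̃(1) = 1`, `S̃(Fy) = S₂(F)y`. -/
noncomputable def St (a : H) : H := Finsupp.sum a.coeff fun w c => c • StW w

/-- The multiple zeta value `ζ(k₁,…,kₙ)`: the sum over strictly decreasing
tuples `m₁ > m₂ > ⋯ > mₙ > 0` of `1/(m₁^{k₁}⋯mₙ^{kₙ})`. -/
noncomputable def mzeta (ks : List ℕ) : ℝ :=
  ∑' m : {f : Fin ks.length → ℕ // (∀ i, 0 < f i) ∧
      ∀ i j : Fin ks.length, i < j → f j < f i},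
    ∏ i : Fin ks.length, ((m.1 i : ℝ) ^ ks.get i)⁻¹

/-- The non-strict multiple zeta value `ζ̄(k₁,…,kₙ)`: the sum over weakly
decreasing tuples `m₁ ≥ m₂ ≥ ⋯ ≥ mₙ > 0` of `1/(m₁^{k₁}⋯mₙ^{kₙ})`. -/
noncomputable def nmzeta (ks : List ℕ) : ℝ :=
  ∑' m : {f : Fin ks.length → ℕ // (∀ i, 0 < f i) ∧
      ∀ i j : Fin ks.length, i ≤ j → f j ≤ f i},
    ∏ i : Fin ks.length, ((m.1 i : ℝ) ^ ks.get i)⁻¹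

/-- The evaluation map `Z : H⁰ → ℝ`, `Z(1) = 1`,
`Z(z_{k₁}⋯z_{kₙ}) = ζ(k₁,…,kₙ)` (extended ℚ-linearly to `H`). -/
noncomputable def Z (a : H) : ℝ := Finsupp.sum a.coeff fun w c => (c : ℝ) * mzeta (toZ w)

/-- The n-evaluation map `Z̄ : H⁰ → ℝ`, `Z̄(1) = 1`,
`Z̄(z_{k₁}⋯z_{kₙ}) = ζ̄(k₁,…,kₙ)` (extended ℚ-linearly to `H`). -/
noncomputable def Zbar (a : H) : ℝ := Finsupp.sum a.coeff fun w c => (c : ℝ) * nmzeta (toZ w)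

/-- `i`-fold n-harmonic power: `a^{*̄ 0} = 1`, `a^{*̄ (i+1)} = a *̄ a^{*̄ i}`. -/
noncomputable def nharmPow : ℕ → H → H
  | 0, _ => 1
  | i + 1, a => nharm a (nharmPow i a)

/-- `i`-fold n-shuffle power: `a^{ш̄ 0} = 1`, `a^{ш̄ (i+1)} = a ш̄ a^{ш̄ i}`. -/
noncomputable def nshPow : ℕ → H → H
  | 0, _ => 1
  | i + 1, a => nsh a (nshPow i a)

end H

open H

/-- `IsRegHom mul ev f` says the ℚ-linear map `f : H → ℝ[T]` is a ℚ-algebra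
homomorphism from `(H¹, mul)` to `ℝ[T]` which extends the evaluation map
`ev` on `H⁰` and sends `y` to `T`. -/
def IsRegHom (mul : H → H → H) (ev : H → ℝ) (f : H →ₗ[ℚ] Polynomial ℝ) : Prop :=
  (∀ a ∈ H1, ∀ b ∈ H1, f (mul a b) = f a * f b) ∧
  (∀ a ∈ H0, f a = Polynomial.C (ev a)) ∧
  f Y = Polynomial.X


namespace RegCompat
open scoped ENNReal

noncomputable def P (m k : ℕ) : ℝ≥0∞ := ((m : ℝ≥0∞) ^ k)⁻¹

open Classical in
noncomputable def I (p : Prop) (a : ℝ≥0∞) : ℝ≥0∞ := if p then a else 0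

lemma I_pos {p : Prop} (h : p) {a : ℝ≥0∞} : I p a = a := by simp [I, h]

lemma I_neg {p : Prop} (h : ¬ p) {a : ℝ≥0∞} : I p a = 0 := by simp [I, h]

noncomputable def G (R : ℕ → ℕ → Prop) : List ℕ → (ℕ → Prop) → ℝ≥0∞
  | [], _ => 1
  | k :: ks, Q => ∑' m : ℕ, I (0 < m ∧ Q m) (P m k * G R ks (fun m' => R m' m))

lemma G_eq (R : ℕ → ℕ → Prop) (hR : ∀ a b c, R a b → R b c → R a c) :
    ∀ (ks : List ℕ) (Q : ℕ → Prop) (_ : ∀ a b, R a b → Q b → Q a),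
    (∑' f : Fin ks.length → ℕ, I ((∀ i, 0 < f i) ∧ (∀ i j, i < j → R (f j) (f i)) ∧ ∀ i, Q (f i)) (∏ i, P (f i) (ks.get i))) = G R ks Q
  | [], Q, hQ => by
    simp [G, I]
  | k :: ks, Q, hQ => by
    rw [G]
    simp only [List.length_cons]
    rw [← (Fin.consEquiv (fun _ : Fin (ks.length + 1) => ℕ)).tsum_eq, ENNReal.tsum_prod']
    refine tsum_congr fun m => ?_
    by_cases hm : 0 < m ∧ Q m
    · rw [I_pos hm, ← G_eq R hR ks _ (fun a b hab hb => hR _ _ _ hab hb), ← ENNReal.tsum_mul_left]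
      refine tsum_congr fun f => ?_
      have : ((∀ i, 0 < (Fin.consEquiv (fun _ : Fin (ks.length + 1) => ℕ)) (m, f) i) ∧
        (∀ i j, i < j → R ((Fin.consEquiv (fun _ : Fin (ks.length + 1) => ℕ)) (m, f) j)
          ((Fin.consEquiv (fun _ : Fin (ks.length + 1) => ℕ)) (m, f) i)) ∧
          ∀ i, Q ((Fin.consEquiv (fun _ : Fin (ks.length + 1) => ℕ)) (m, f) i)) ↔
          ((∀ i, 0 < f i) ∧ (∀ i j, i < j → R (f j) (f i)) ∧ ∀ i, R (f i) m) := by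
        simp only [Fin.consEquiv, Equiv.coe_fn_mk, Fin.forall_fin_succ, Fin.cons_zero,
          Fin.cons_succ, Fin.succ_lt_succ_iff, Fin.succ_pos, Fin.not_lt_zero, lt_self_iff_false]
        constructor
        · rintro ⟨⟨_, h1⟩, ⟨⟨_, h2⟩, h3⟩, _, h4⟩
          exact ⟨h1, fun i j h => (h3 i).2 j h, fun i => h2 i trivial⟩
        · rintro ⟨h1, h2, h3⟩
          exact ⟨⟨hm.1, h1⟩, ⟨⟨fun h => h.elim, fun i _ => h3 i⟩, fun i => ⟨fun h => h.elim, fun j h => h2 i j h⟩⟩,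
            hm.2, fun i => hQ _ _ (h3 i) hm.2⟩
      simp only [List.length_cons] at this ⊢
      simp only [this]
      unfold I; split_ifs
      · rw [Fin.prod_univ_succ]
        simp [Fin.consEquiv]
      · simp
    · rw [I_neg hm, ENNReal.tsum_eq_zero]
      intro f
      rw [I_neg]
      rintro ⟨h1, _, h3⟩
      exact hm ⟨h1 0, h3 0⟩

lemma P_toReal (m k : ℕ) : (P m k).toReal = ((m : ℝ) ^ k)⁻¹ := by
  simp [P]

lemma P_ne_top {m k : ℕ} (h : 0 < m) : P m k ≠ ⊤ := by
  simp [P, h.ne']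

open Classical in
lemma mzeta_eq (ks : List ℕ) : mzeta ks = (G (· < ·) ks (fun _ => True)).toReal := by
  rw [← G_eq (· < ·) (fun (a b c : ℕ) => lt_trans) _ _ (fun _ _ _ _ => trivial), mzeta]
  have := tsum_subtype {f : Fin ks.length → ℕ | (∀ i, 0 < f i) ∧
      ∀ i j : Fin ks.length, i < j → f j < f i} (fun f => ∏ i, P (f i) (ks.get i))
  have h2 : (∑' f : Fin ks.length → ℕ, I ((∀ i, 0 < f i) ∧ (∀ i j, i < j → (f j) < (f i)) ∧ ∀ i : Fin ks.length, True) (∏ i, P (f i) (ks.get i))) = ∑' f : {f : Fin ks.length → ℕ | (∀ i, 0 < f i) ∧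
      ∀ i j : Fin ks.length, i < j → f j < f i}, ∏ i, P (f.1 i) (ks.get i) := by
    rw [this]
    refine tsum_congr fun f => ?_
    simp [Set.indicator, I]
  rw [h2, ENNReal.tsum_toReal_eq]
  · refine tsum_congr fun f => ?_
    rw [ENNReal.toReal_prod]
    simp [P_toReal]
  · intro f
    exact ENNReal.prod_ne_top fun i _ => P_ne_top (f.2.1 i)

open Classical in
lemma nmzeta_eq (ks : List ℕ) : nmzeta ks = (G (· ≤ ·) ks (fun _ => True)).toReal := by
  rw [← G_eq (· ≤ ·) (fun (a b c : ℕ) => le_trans) _ _ (fun _ _ _ _ => trivial), nmzeta]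
  have := tsum_subtype {f : Fin ks.length → ℕ | (∀ i, 0 < f i) ∧
      ∀ i j : Fin ks.length, i ≤ j → f j ≤ f i} (fun f => ∏ i, P (f i) (ks.get i))
  have h2 : (∑' f : Fin ks.length → ℕ, I ((∀ i, 0 < f i) ∧ (∀ i j, i < j → (f j) ≤ (f i)) ∧ ∀ i : Fin ks.length, True) (∏ i, P (f i) (ks.get i))) = ∑' f : {f : Fin ks.length → ℕ | (∀ i, 0 < f i) ∧
      ∀ i j : Fin ks.length, i ≤ j → f j ≤ f i}, ∏ i, P (f.1 i) (ks.get i) := by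
    rw [this]
    refine tsum_congr fun f => ?_
    have : (∀ i j, i < j → (f j) ≤ (f i)) ↔ (∀ i j, i ≤ j → (f j) ≤ (f i)) := by
      refine ⟨fun h i j hij => ?_, fun h i j hij => h i j hij.le⟩
      rcases hij.lt_or_eq with h' | rfl
      · exact h i j h'
      · exact le_rfl
    simp [Set.indicator, I, this]
  rw [h2, ENNReal.tsum_toReal_eq]
  · refine tsum_congr fun f => ?_
    rw [ENNReal.toReal_prod]
    simp [P_toReal]
  · intro f
    exact ENNReal.prod_ne_top fun i _ => P_ne_top (f.2.1 i)

def headAdd (k : ℕ) : List ℕ → List ℕ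
  | [] => [k]
  | l :: s => (k + l) :: s

/-- All ways of merging adjacent entries. -/
def sL : List ℕ → List (List ℕ)
  | [] => [[]]
  | [k] => [[k]]
  | k :: l :: ks => (sL (l :: ks)).map (fun s => k :: s) ++ (sL (l :: ks)).map (headAdd k)

lemma sL_ne : ∀ ks : List ℕ, ks ≠ [] → ∀ s ∈ sL ks, s ≠ []
  | [], h => absurd rfl h
  | [k], _ => by simp [sL]
  | k :: l :: ks, _ => by
    intro s hs
    simp only [sL, List.mem_append, List.mem_map] at hs
    rcases hs with ⟨t, _, rfl⟩ | ⟨t, _, rfl⟩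
    · simp
    · cases t <;> simp [headAdd]

/-- The part of `G` with first summation index `m`. -/
noncomputable def E (R : ℕ → ℕ → Prop) : List ℕ → ℕ → ℝ≥0∞
  | [], _ => 1
  | k :: ks, m => P m k * G R ks (fun m' => R m' m)

lemma G_E (R : ℕ → ℕ → Prop) (ks : List ℕ) (h : ks ≠ []) (Q : ℕ → Prop) :
    G R ks Q = ∑' m : ℕ, I (0 < m ∧ Q m) (E R ks m) := by
  cases ks with
  | nil => exact absurd rfl h
  | cons k ks => rfl

lemma E_headAdd (R : ℕ → ℕ → Prop) (k : ℕ) (s : List ℕ) (h : s ≠ []) (m : ℕ) (hm : 0 < m) :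
    E R (headAdd k s) m = P m k * E R s m := by
  cases s with
  | nil => exact absurd rfl h
  | cons l s =>
    simp only [headAdd, E, P, pow_add]
    rw [ENNReal.mul_inv (by simp [hm.ne']) (by simp), mul_assoc]

lemma tsum_list (Q : ℕ → Prop) (F : List ℕ → ℕ → ℝ≥0∞) : ∀ L : List (List ℕ),
    (∑' m : ℕ, I (Q m) ((L.map fun s => F s m).sum)) =
      (L.map fun s => ∑' m : ℕ, I (Q m) (F s m)).sum
  | [] => by simp [I]
  | s :: L => by
    simp only [List.map_cons, List.sum_cons]
    rw [← tsum_list Q F L, ← ENNReal.tsum_add]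
    refine tsum_congr fun m => ?_
    unfold I; split_ifs <;> simp

lemma E_sL : ∀ ks : List ℕ, ks ≠ [] → ∀ m, 0 < m →
    E (· ≤ ·) ks m = ((sL ks).map fun s => E (· < ·) s m).sum
  | [], h => absurd rfl h
  | [k], _ => by simp [sL, E, G]
  | k :: l :: ks, _ => by
    intro m hm
    have ih := E_sL (l :: ks) (by simp)
    have h1 : E (· ≤ ·) (k :: l :: ks) m = P m k * G (· ≤ ·) (l :: ks) (· ≤ m) := rfl
    have h2 : G (· ≤ ·) (l :: ks) (· ≤ m) =
        (∑' m' : ℕ, I (0 < m' ∧ m' < m) (E (· ≤ ·) (l :: ks) m'))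
          + E (· ≤ ·) (l :: ks) m := by
      rw [G_E _ _ (by simp), ← tsum_ite_eq m (fun _ => E (· ≤ ·) (l :: ks) m), ← ENNReal.tsum_add]
      refine tsum_congr fun m' => ?_
      rcases lt_trichotomy m' m with h | rfl | h
      · simp [I, h, h.le, h.ne]
      · simp [I, hm]
      · simp [I, h.not_ge, h.not_gt, h.ne']
    have h3 : (∑' m' : ℕ, I (0 < m' ∧ m' < m) (E (· ≤ ·) (l :: ks) m')) =
        ∑' m' : ℕ, I (0 < m' ∧ m' < m) (((sL (l :: ks)).map fun s => E (· < ·) s m').sum) := by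
      refine tsum_congr fun m' => ?_
      unfold I; split_ifs with h
      · exact ih m' h.1
      · rfl
    rw [h1, h2, h3, ih m hm, tsum_list, mul_add, sL, List.map_append, List.sum_append,
      List.map_map, List.map_map, ← List.sum_map_mul_left, ← List.sum_map_mul_left]
    congr 2
    · refine List.map_congr_left fun s hs => ?_
      rw [← G_E _ _ (sL_ne _ (by simp) s hs)]
      rfl
    · refine List.map_congr_left fun s hs => ?_
      exact (E_headAdd _ _ _ (sL_ne _ (by simp) s hs) _ hm).symm

lemma G_sL (ks : List ℕ) (h : ks ≠ []) :
    G (· ≤ ·) ks (fun _ => True) = ((sL ks).map fun s => G (· < ·) s (fun _ => True)).sum := by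
  rw [G_E _ _ h]
  have h3 : (∑' m' : ℕ, I (0 < m' ∧ True) (E (· ≤ ·) ks m')) =
        ∑' m' : ℕ, I (0 < m' ∧ True) (((sL ks).map fun s => E (· < ·) s m').sum) := by
      refine tsum_congr fun m' => ?_
      unfold I; split_ifs with h'
      · exact E_sL ks h m' h'.1
      · rfl
  rw [h3, tsum_list]
  congr 1
  refine List.map_congr_left fun s hs => ?_
  rw [← G_E _ _ (sL_ne _ h s hs)]

lemma P_le {m k : ℕ} (hm : 0 < m) (j : ℕ) (hk : j ≤ k) : P m k ≤ ENNReal.ofReal (((m : ℝ) ^ j)⁻¹) := by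
  rw [← P_toReal, ENNReal.ofReal_toReal (P_ne_top hm), P, P, ENNReal.inv_le_inv]
  exact pow_le_pow_right₀ (by exact_mod_cast hm) hk

lemma sum_sqrt (N : ℕ) : ∑ m ∈ Finset.Icc 1 N, (m : ℝ)⁻¹ * √m ≤ 2 * √N := by
  induction N with
  | zero => simp
  | succ n ih =>
    rw [Finset.sum_Icc_succ_top (by omega)]
    have h1 : (0:ℝ) ≤ n := by positivity
    set a := √(n : ℝ)
    have ha : a ^ 2 = n := Real.sq_sqrt h1
    have ha0 : 0 ≤ a := Real.sqrt_nonneg _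
    set b := √((n + 1 : ℕ) : ℝ)
    have hb : b ^ 2 = (n + 1 : ℕ) := Real.sq_sqrt (by positivity)
    have hb0 : 0 < b := Real.sqrt_pos.2 (by positivity)
    rw [← hb]
    have : (b ^ 2)⁻¹ * b = 1 / b := by field_simp
    rw [this]
    have h3 : 1 / b ≤ 2 * b - 2 * a := by
      rw [div_le_iff₀ hb0]
      push_cast at hb
      nlinarith [sq_nonneg (a - b)]
    linarith

lemma G_bound : ∀ ks : List ℕ, (∀ k ∈ ks, 1 ≤ k) → ∀ N : ℕ, 0 < N →
    G (· ≤ ·) ks (· ≤ N) ≤ ENNReal.ofReal (2 ^ ks.length * √N)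
  | [], _ => by
    intro N hN
    simp only [G, List.length_nil, pow_zero, one_mul, ENNReal.one_le_ofReal, Real.one_le_sqrt]
    exact_mod_cast hN
  | k :: ks, h => by
    intro N hN
    rw [G]
    rw [tsum_eq_sum (s := Finset.Icc 1 N) (by
      intro m hm
      rw [I_neg]
      simpa [Nat.succ_le_iff] using hm)]
    calc _ ≤ ∑ m ∈ Finset.Icc 1 N, ENNReal.ofReal ((m:ℝ)⁻¹ * (2 ^ ks.length * √m)) := by
          refine Finset.sum_le_sum fun m hm => ?_
          rw [Finset.mem_Icc] at hm
          rw [I_pos ⟨by omega, hm.2⟩, ENNReal.ofReal_mul (by positivity)]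
          gcongr
          · simpa using P_le (by omega) 1 (h k (by simp))
          · exact G_bound ks (fun k hk => h k (by simp [hk])) m (by omega)
      _ = ENNReal.ofReal (∑ m ∈ Finset.Icc 1 N, ((m:ℝ)⁻¹ * (2 ^ ks.length * √m))) := by
          rw [ENNReal.ofReal_sum_of_nonneg]
          intros; positivity
      _ ≤ _ := by
          apply ENNReal.ofReal_le_ofReal
          have := sum_sqrt N
          have e : ∑ m ∈ Finset.Icc 1 N, ((m:ℝ)⁻¹ * (2 ^ ks.length * √m)) =
            2 ^ ks.length * ∑ m ∈ Finset.Icc 1 N, (m : ℝ)⁻¹ * √m := by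
            rw [Finset.mul_sum]
            refine Finset.sum_congr rfl fun m _ => by ring
          rw [e, List.length_cons, pow_succ, mul_assoc]
          gcongr

lemma G_fin (k : ℕ) (ks : List ℕ) (hk : 2 ≤ k) (h : ∀ k ∈ ks, 1 ≤ k) :
    G (· ≤ ·) (k :: ks) (fun _ => True) ≠ ⊤ := by
  rw [G]
  have hs : Summable (fun m : ℕ => 2 ^ ks.length * (m : ℝ) ^ (-(3/2) : ℝ)) :=
    (Real.summable_nat_rpow.2 (by norm_num)).mul_left _
  refine ne_top_of_le_ne_top (b := ∑' m : ℕ, ENNReal.ofReal (2 ^ ks.length * (m : ℝ) ^ (-(3/2) : ℝ))) ?_ ?_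
  · exact hs.tsum_ofReal_ne_top
  · refine ENNReal.tsum_le_tsum fun m => ?_
    unfold I; split_ifs with hm
    · calc _ ≤ ENNReal.ofReal (((m:ℝ)^2)⁻¹) * ENNReal.ofReal (2 ^ ks.length * √m) := by
            gcongr
            · exact P_le hm.1 2 hk
            · exact G_bound ks h m hm.1
        _ = _ := by
            rw [← ENNReal.ofReal_mul (by positivity)]
            congr 1
            have hm' : (0:ℝ) < m := by exact_mod_cast hm.1
            have : ((m:ℝ)^2)⁻¹ * √m = (m : ℝ) ^ (-(3/2) : ℝ) := by
              rw [Real.sqrt_eq_rpow, ← Real.rpow_natCast, ← Real.rpow_neg hm'.le, ← Real.rpow_add hm']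
              norm_num
            rw [← this]; ring
    · simp

lemma list_toReal : ∀ L : List ℝ≥0∞, L.sum ≠ ⊤ → L.sum.toReal = (L.map ENNReal.toReal).sum
  | [], _ => by simp
  | a :: L, h => by
    rw [List.sum_cons] at h ⊢
    rw [ENNReal.add_ne_top] at h
    rw [ENNReal.toReal_add h.1 h.2, list_toReal L h.2, List.map_cons, List.sum_cons]

lemma nmzeta_sL (k : ℕ) (ks : List ℕ) (hk : 2 ≤ k) (h : ∀ k ∈ ks, 1 ≤ k) :
    nmzeta (k :: ks) = ((sL (k :: ks)).map mzeta).sum := by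
  have h1 := G_fin k ks hk h
  rw [nmzeta_eq]
  rw [G_sL _ (by simp)] at h1 ⊢
  rw [list_toReal _ h1, List.map_map]
  congr 1
  refine List.map_congr_left fun s _ => ?_
  rw [mzeta_eq]; rfl

end RegCompat

namespace RegCompat

noncomputable def lext {M : Type*} [AddCommGroup M] [Module ℚ M] (φ : FreeMonoid Letter → M) :
    H →ₗ[ℚ] M :=
  (Finsupp.linearCombination ℚ φ) ∘ₗ (MonoidAlgebra.coeffLinearEquiv ℚ).toLinearMap

lemma lext_apply {M : Type*} [AddCommGroup M] [Module ℚ M] (φ : FreeMonoid Letter → M) (a : H) :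
    lext φ a = Finsupp.sum a.coeff fun w c => c • φ w := rfl

lemma lext_word {M : Type*} [AddCommGroup M] [Module ℚ M] (φ : FreeMonoid Letter → M)
    (w : FreeMonoid Letter) : lext φ (word w) = φ w := by
  rw [lext_apply, word, MonoidAlgebra.coeff_single, Finsupp.sum_single_index] <;> simp

noncomputable def wd (l : List Letter) : H := word (FreeMonoid.ofList l)

lemma wd_append (a b : List Letter) : wd (a ++ b) = wd a * wd b := by
  simp [wd, word, MonoidAlgebra.single_mul_single, FreeMonoid.ofList_append]

lemma wd_nil : wd [] = 1 := rfl
lemma wd_x : wd [Letter.x] = X := rfl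
lemma wd_y : wd [Letter.y] = Y := rfl
lemma wd_xc (l : List Letter) : wd (Letter.x :: l) = X * wd l := wd_append [Letter.x] l
lemma wd_yc (l : List Letter) : wd (Letter.y :: l) = Y * wd l := wd_append [Letter.y] l

lemma lext_wd {M : Type*} [AddCommGroup M] [Module ℚ M] (φ : FreeMonoid Letter → M)
    (l : List Letter) : lext φ (wd l) = φ (FreeMonoid.ofList l) := lext_word _ _

lemma mem_of_words (p : Submodule ℚ H) (h : ∀ l, wd l ∈ p) (a : H) : a ∈ p := by
  induction a using MonoidAlgebra.induction_on with
  | of m => exact h m.toList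
  | add x y hx hy => exact p.add_mem hx hy
  | smul r x hx => exact p.smul_mem r hx

noncomputable def Hy : Submodule ℚ H := LinearMap.range (LinearMap.mulRight ℚ Y)

lemma mem_Hy (a : H) : a * Y ∈ Hy := ⟨a, rfl⟩
lemma wd_mem_Hy (l : List Letter) : wd (l ++ [Letter.y]) ∈ Hy := by
  rw [wd_append]; exact mem_Hy _

lemma Hy_le (p : Submodule ℚ H) (h : ∀ l, wd (l ++ [Letter.y]) ∈ p) : Hy ≤ p := by
  rintro _ ⟨a, rfl⟩
  refine mem_of_words (p.comap (LinearMap.mulRight ℚ Y)) (fun l => ?_) a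
  have := h l
  rwa [wd_append] at this

lemma H1_le (p : Submodule ℚ H) (h1 : 1 ∈ p) (h : ∀ l, wd (l ++ [Letter.y]) ∈ p) : H1 ≤ p :=
  sup_le (Hy_le p h) (by simpa using h1)

lemma Hy_le_H1 : Hy ≤ H1 := le_sup_left
lemma one_mem_H1 : (1 : H) ∈ H1 := Submodule.mem_sup_right (Submodule.mem_span_singleton_self _)
lemma one_mem_H0 : (1 : H) ∈ H0 := Submodule.mem_sup_right (Submodule.mem_span_singleton_self _)
lemma Y_mem_Hy : Y ∈ Hy := by simpa using mem_Hy 1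
lemma X_mul_mem_H0 {v : H} (hv : v ∈ Hy) : X * v ∈ H0 := by
  obtain ⟨a, rfl⟩ := hv
  exact Submodule.mem_sup_left ⟨a, by simp [mul_assoc]⟩
lemma H0_le (p : Submodule ℚ H) (h1 : 1 ∈ p) (h : ∀ v ∈ Hy, X * v ∈ p) : H0 ≤ p := by
  refine sup_le ?_ (by simpa using h1)
  rintro _ ⟨a, rfl⟩
  have := h _ (mem_Hy a)
  simpa [mul_assoc] using this
lemma mul_mem_Hy (b : H) {v : H} (hv : v ∈ Hy) : b * v ∈ Hy := by
  obtain ⟨a, rfl⟩ := hv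
  have := mem_Hy (b * a)
  simpa [mul_assoc] using this
lemma Y_mul_mem_Hy {v : H} (hv : v ∈ H1) : Y * v ∈ Hy := by
  refine H1_le (Hy.comap (LinearMap.mulLeft ℚ Y)) ?_ ?_ hv
  · simpa using Y_mem_Hy
  · intro l; exact mul_mem_Hy _ (wd_mem_Hy l)
lemma H0_le_H1 : H0 ≤ H1 :=
  H0_le _ one_mem_H1 fun _ hv => Hy_le_H1 (mul_mem_Hy _ hv)

/-- two linear maps agreeing on words ending with `y` agree on `Hy`. -/
lemma eq_on_Hy {M : Type*} [AddCommGroup M] [Module ℚ M] (f g : H →ₗ[ℚ] M)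
    (h : ∀ l, f (wd (l ++ [Letter.y])) = g (wd (l ++ [Letter.y]))) {v : H} (hv : v ∈ Hy) :
    f v = g v :=
  Hy_le (LinearMap.eqLocus f g) h hv

lemma eq_on_H1 {M : Type*} [AddCommGroup M] [Module ℚ M] (f g : H →ₗ[ℚ] M)
    (h1 : f 1 = g 1)
    (h : ∀ l, f (wd (l ++ [Letter.y])) = g (wd (l ++ [Letter.y]))) {v : H} (hv : v ∈ H1) :
    f v = g v :=
  H1_le (LinearMap.eqLocus f g) h1 h hv

/-! ### The map `S` -/

noncomputable def Sl : H →ₗ[ℚ] H := lext SW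

lemma S_eq (a : H) : S a = Sl a := rfl

lemma Sl_one : Sl 1 = 1 := by
  rw [← wd_nil, Sl, lext_wd]; rfl

lemma Sl_mulY (a : H) : Sl (a * Y) = S1 a * Y := by
  refine mem_of_words (LinearMap.eqLocus (Sl ∘ₗ LinearMap.mulRight ℚ Y)
    (LinearMap.mulRight ℚ Y ∘ₗ S1.toLinearMap)) (fun l => ?_) a
  change Sl (wd l * Y) = S1 (wd l) * Y
  rw [← wd_y, ← wd_append, Sl, lext_wd]
  simp [SW, wd]
  exact Or.inl rfl

lemma S1_X : S1 X = X := by simp [S1, X, word]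
lemma S1_Y : S1 Y = X + Y := by simp [S1, Y, word]

lemma Sl_Y : Sl Y = Y := by simpa using Sl_mulY 1
lemma Sl_X_mul {v : H} (hv : v ∈ Hy) : Sl (X * v) = X * Sl v := by
  obtain ⟨a, rfl⟩ := hv
  simp only [LinearMap.mulRight_apply]
  rw [← mul_assoc, Sl_mulY, Sl_mulY, map_mul, S1_X, mul_assoc]
lemma Sl_Y_mul {v : H} (hv : v ∈ Hy) : Sl (Y * v) = (X + Y) * Sl v := by
  obtain ⟨a, rfl⟩ := hv
  simp only [LinearMap.mulRight_apply]
  rw [← mul_assoc, Sl_mulY, Sl_mulY, map_mul, S1_Y, mul_assoc]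
lemma Sl_mem_Hy {v : H} (hv : v ∈ Hy) : Sl v ∈ Hy := by
  obtain ⟨a, rfl⟩ := hv
  simp only [LinearMap.mulRight_apply]
  rw [Sl_mulY]; exact mem_Hy _
lemma Sl_mem_H1 {v : H} (hv : v ∈ H1) : Sl v ∈ H1 := by
  refine H1_le (H1.comap Sl) ?_ ?_ hv
  · simpa [Sl_one] using one_mem_H1
  · intro l; exact Hy_le_H1 (Sl_mem_Hy (wd_mem_Hy l))
lemma Sl_mem_H0 {v : H} (hv : v ∈ H0) : Sl v ∈ H0 := by
  refine H0_le (H0.comap Sl) ?_ ?_ hv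
  · simpa [Sl_one] using one_mem_H0
  · intro v hv
    rw [Submodule.mem_comap, Sl_X_mul hv]
    exact X_mul_mem_H0 (Sl_mem_Hy hv)

/-! ### `z`-decompositions -/

lemma toZAux_ne : ∀ (l : List Letter) (n : ℕ), toZAux (l ++ [Letter.y]) n ≠ []
  | [], n => by simp [toZAux]
  | Letter.x :: l, n => by simpa [toZAux] using toZAux_ne l (n + 1)
  | Letter.y :: l, n => by simp [toZAux]

lemma toZAux_add (k : ℕ) : ∀ (l : List Letter) (n : ℕ),
    toZAux (l ++ [Letter.y]) (k + n) = headAdd k (toZAux (l ++ [Letter.y]) n)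
  | [], n => by simp [toZAux, headAdd, add_assoc]
  | Letter.x :: l, n => by simpa [toZAux, add_assoc] using toZAux_add k l (n + 1)
  | Letter.y :: l, n => by simp [toZAux, headAdd, add_assoc]

lemma toZAux_pos : ∀ (l : List Letter) (n : ℕ), ∀ k ∈ toZAux l n, 1 ≤ k
  | [], n => by simp [toZAux]
  | Letter.x :: l, n => by simpa [toZAux] using toZAux_pos l (n + 1)
  | Letter.y :: l, n => by simpa [toZAux] using toZAux_pos l 0

/-- parse of a list -/
def tz (l : List Letter) : List ℕ := toZAux l 0

lemma toZ_ofList (l : List Letter) : toZ (FreeMonoid.ofList l) = tz l := rfl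

lemma tz_ne (l : List Letter) : tz (l ++ [Letter.y]) ≠ [] := toZAux_ne l 0

lemma tz_pos (l : List Letter) : ∀ k ∈ tz l, 1 ≤ k := toZAux_pos l 0

lemma tz_x (l : List Letter) :
    tz (Letter.x :: (l ++ [Letter.y])) = headAdd 1 (tz (l ++ [Letter.y])) := by
  simpa [tz, toZAux] using toZAux_add 1 l 0

lemma tz_y (l : List Letter) : tz (Letter.y :: l) = 1 :: tz l := rfl

noncomputable def wz (ks : List ℕ) : H := word (zListW ks)

lemma wz_nil : wz [] = 1 := rfl

lemma wz_cons (k : ℕ) (ks : List ℕ) : wz (k :: ks) = z k * wz ks := by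
  change wd _ = wd _ * wd _
  rw [← wd_append]
  simp

lemma z_one : z 1 = Y := rfl
lemma z_succ {k : ℕ} (hk : 1 ≤ k) : z (1 + k) = X * z k := by
  obtain ⟨j, rfl⟩ := Nat.exists_eq_add_of_le hk
  change wd _ = X * wd _
  rw [← wd_xc]
  simp [← add_assoc, add_comm 1 j, List.replicate_succ]

lemma wz_headAdd (ks : List ℕ) (h : ks ≠ []) (hk : ∀ k ∈ ks, 1 ≤ k) :
    wz (headAdd 1 ks) = X * wz ks := by
  cases ks with
  | nil => exact absurd rfl h
  | cons k ks =>
    rw [headAdd, wz_cons, wz_cons, z_succ (hk k (by simp)), mul_assoc]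

lemma wz_tz : ∀ l : List Letter, wz (tz (l ++ [Letter.y])) = wd (l ++ [Letter.y])
  | [] => rfl
  | Letter.x :: l => by
    rw [List.cons_append, tz_x, wz_headAdd _ (tz_ne _) (tz_pos _), wz_tz l, wd_xc]
  | Letter.y :: l => by
    rw [List.cons_append, tz_y, wz_cons, wz_tz l, wd_yc, z_one]

lemma toZAux_rep (r : List Letter) : ∀ j n : ℕ,
    toZAux (List.replicate j Letter.x ++ Letter.y :: r) n = (n + j + 1) :: toZAux r 0
  | 0, n => by simp [toZAux]
  | j + 1, n => by
    rw [List.replicate_succ, List.cons_append, toZAux, toZAux_rep r j]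
    congr 1; omega

lemma toZ_zListW : ∀ ks : List ℕ, (∀ k ∈ ks, 1 ≤ k) → toZ (zListW ks) = ks
  | [], _ => rfl
  | k :: ks, h => by
    have ih := toZ_zListW ks (fun k hk => h k (by simp [hk]))
    have hk := h k (by simp)
    change toZAux _ 0 = _
    change toZAux _ 0 = _ at ih
    simp only [zListW, FreeMonoid.toList_ofList] at ih ⊢
    rw [List.flatMap_cons, List.append_assoc, List.singleton_append, toZAux_rep, ih]
    congr 1; omega

lemma sL_pos : ∀ ks : List ℕ, (∀ k ∈ ks, 1 ≤ k) → ∀ s ∈ sL ks, ∀ k ∈ s, 1 ≤ k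
  | [], h => by simp [sL]
  | [k], h => by simpa [sL] using h
  | k :: l :: ks, h => by
    intro s hs
    have ih := sL_pos (l :: ks) (fun k hk => h k (by simp at hk ⊢; tauto))
    have hk := h k (by simp)
    simp only [sL, List.mem_append, List.mem_map] at hs
    rcases hs with ⟨t, ht, rfl⟩ | ⟨t, ht, rfl⟩
    · simpa [hk] using ih t ht
    · have := ih t ht
      cases t with
      | nil => simpa [headAdd] using hk
      | cons a t =>
        simp [headAdd] at this ⊢
        exact ⟨by omega, this.2⟩

lemma headAdd_headAdd (k : ℕ) (t : List ℕ) (ht : t ≠ []) :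
    headAdd (1 + k) t = headAdd 1 (headAdd k t) := by
  cases t with
  | nil => exact absurd rfl ht
  | cons a t => simp [headAdd, add_assoc]

lemma sL_headAdd : ∀ ks : List ℕ, ks ≠ [] → sL (headAdd 1 ks) = (sL ks).map (headAdd 1)
  | [], h => absurd rfl h
  | [k], _ => by simp [sL, headAdd]
  | k :: l :: ks, _ => by
    rw [headAdd, sL, sL, List.map_append, List.map_map, List.map_map]
    congr 1
    refine List.map_congr_left fun t ht => ?_
    exact headAdd_headAdd _ _ (sL_ne _ (by simp) t ht)

lemma sL_one (ks : List ℕ) (h : ks ≠ []) :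
    sL (1 :: ks) = (sL ks).map (fun s => 1 :: s) ++ (sL ks).map (headAdd 1) := by
  cases ks with
  | nil => exact absurd rfl h
  | cons k ks => rfl

lemma Sl_wd : ∀ l : List Letter, Sl (wd (l ++ [Letter.y])) =
    ((sL (tz (l ++ [Letter.y]))).map wz).sum
  | [] => by
    change Sl Y = _
    rw [Sl_Y]
    simp [tz, toZAux, sL]
    rfl
  | Letter.x :: l => by
    rw [List.cons_append, wd_xc, Sl_X_mul (wd_mem_Hy l), Sl_wd l, tz_x,
      sL_headAdd _ (tz_ne _), List.map_map, ← List.sum_map_mul_left]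
    congr 1
    refine List.map_congr_left fun t ht => ?_
    exact (wz_headAdd _ (sL_ne _ (tz_ne _) t ht) (sL_pos _ (tz_pos _) t ht)).symm
  | Letter.y :: l => by
    rw [List.cons_append, wd_yc, Sl_Y_mul (wd_mem_Hy l), Sl_wd l, tz_y,
      sL_one _ (tz_ne _), List.map_append, List.sum_append, List.map_map, List.map_map,
      add_mul, add_comm, ← List.sum_map_mul_left, ← List.sum_map_mul_left]
    congr 2
    · refine List.map_congr_left fun t ht => ?_
      simp [wz_cons, z_one]
    · refine List.map_congr_left fun t ht => ?_
      exact (wz_headAdd _ (sL_ne _ (tz_ne _) t ht) (sL_pos _ (tz_pos _) t ht)).symm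

noncomputable def Zl : H →ₗ[ℚ] ℝ := lext fun w => mzeta (toZ w)
noncomputable def Zbl : H →ₗ[ℚ] ℝ := lext fun w => nmzeta (toZ w)

lemma Z_eq (a : H) : Z a = Zl a := by simp [Z, Zl, lext_apply, Rat.smul_def]
lemma Zbar_eq (a : H) : Zbar a = Zbl a := by simp [Zbar, Zbl, lext_apply, Rat.smul_def]

lemma Zbar_S {a : H} (ha : a ∈ H0) : Zbar a = Z (S a) := by
  rw [Z_eq, Zbar_eq, S_eq]
  refine H0_le (LinearMap.eqLocus Zbl (Zl ∘ₗ Sl)) ?_ ?_ ha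
  · change Zbl 1 = Zl (Sl 1)
    rw [Sl_one, ← wd_nil, Zbl, Zl, lext_wd, lext_wd]
    change nmzeta [] = mzeta []
    rw [nmzeta_eq, mzeta_eq]; rfl
  · intro v hv
    refine eq_on_Hy (Zbl ∘ₗ LinearMap.mulLeft ℚ X) (Zl ∘ₗ Sl ∘ₗ LinearMap.mulLeft ℚ X) ?_ hv
    intro l
    simp only [LinearMap.comp_apply, LinearMap.mulLeft_apply]
    rw [← wd_xc, ← List.cons_append, Sl_wd, map_list_sum, List.map_map, Zbl, lext_wd,
      toZ_ofList]
    have h2 : tz (Letter.x :: l ++ [Letter.y]) = headAdd 1 (tz (l ++ [Letter.y])) := tz_x l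
    have hp : ∀ k ∈ tz (Letter.x :: l ++ [Letter.y]), 1 ≤ k := toZAux_pos _ _
    have e : List.map (Zl ∘ wz) (sL (tz (Letter.x :: l ++ [Letter.y]))) =
        List.map mzeta (sL (tz (Letter.x :: l ++ [Letter.y]))) := by
      refine List.map_congr_left fun t ht => ?_
      simp only [Function.comp, Zl, wz, lext_word]
      rw [toZ_zListW _ (sL_pos _ hp t ht)]
    rw [e]
    have h3 := toZAux_ne l 0
    have h4 := toZAux_pos (l ++ [Letter.y]) 0
    change tz _ ≠ [] at h3
    change ∀ k ∈ tz _, _ at h4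
    rw [h2]
    generalize tz (l ++ [Letter.y]) = ks at h3 h4
    cases ks with
    | nil => exact absurd rfl h3
    | cons k ks =>
      have := h4 k (by simp)
      exact nmzeta_sL _ _ (by omega) fun k hk => h4 k (by simp [hk])

end RegCompat

namespace RegCompat

lemma tz_cons (l : List Letter) : ∃ m ks, tz (l ++ [Letter.y]) = m :: ks ∧ 1 ≤ m := by
  have h1 := tz_ne l
  have h2 := tz_pos (l ++ [Letter.y])
  cases h : tz (l ++ [Letter.y]) with
  | nil => exact absurd h h1
  | cons m ks => exact ⟨m, ks, rfl, h2 m (by simp [h])⟩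

/-! ### Left multiplication by `y` for the four products -/

noncomputable def Dh : H →ₗ[ℚ] H := lext fun w => harmW [1] (toZ w)
noncomputable def Dnh : H →ₗ[ℚ] H := lext fun w => nharmW [1] (toZ w)
noncomputable def Ds : H →ₗ[ℚ] H := lext fun w => shW [Letter.y] (FreeMonoid.toList w)
noncomputable def Dns : H →ₗ[ℚ] H := lext fun w => nshW [Letter.y] (FreeMonoid.toList w)

lemma harm_Y (a : H) : harm Y a = Dh a := by
  rw [harm, Y, word, MonoidAlgebra.coeff_single, Finsupp.sum_single_index]
  · simp only [one_mul]; rfl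
  · simp
lemma nharm_Y (a : H) : nharm Y a = Dnh a := by
  rw [nharm, Y, word, MonoidAlgebra.coeff_single, Finsupp.sum_single_index]
  · simp only [one_mul]; rfl
  · simp
lemma sh_Y (a : H) : sh Y a = Ds a := by
  rw [sh, Y, word, MonoidAlgebra.coeff_single, Finsupp.sum_single_index]
  · simp only [one_mul]; rfl
  · simp
lemma nsh_Y (a : H) : nsh Y a = Dns a := by
  rw [nsh, Y, word, MonoidAlgebra.coeff_single, Finsupp.sum_single_index]
  · simp only [one_mul]; rfl
  · simp

lemma harmW_nil (w : List ℕ) : harmW [] w = wz w := by rw [harmW]; rfl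
lemma nharmW_nil (w : List ℕ) : nharmW [] w = wz w := by rw [nharmW]; rfl
lemma harmW_one (w : List ℕ) : harmW [1] [] = Y := by rw [harmW]; rfl
lemma nharmW_one (w : List ℕ) : nharmW [1] [] = Y := by rw [nharmW]; rfl

lemma harmW_cons (l : ℕ) (w : List ℕ) : harmW [1] (l :: w) =
    Y * wz (l :: w) + z l * harmW [1] w + z (1 + l) * wz w := by
  rw [harmW, harmW_nil, harmW_nil, z_one]
lemma nharmW_cons (l : ℕ) (w : List ℕ) : nharmW [1] (l :: w) =
    Y * wz (l :: w) + z l * nharmW [1] w - z (1 + l) * wz w := by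
  rw [nharmW, nharmW_nil, nharmW_nil, z_one]

lemma Dh_one : Dh 1 = Y := by
  rw [← wd_nil, Dh, lext_wd, toZ_ofList]; exact harmW_one []
lemma Dnh_one : Dnh 1 = Y := by
  rw [← wd_nil, Dnh, lext_wd, toZ_ofList]; exact nharmW_one []

lemma Dh_X {v : H} (hv : v ∈ Hy) : Dh (X * v) = Y * (X * v) + X * Dh v - X * (Y * v) := by
  refine eq_on_Hy (Dh ∘ₗ LinearMap.mulLeft ℚ X) (LinearMap.mulLeft ℚ Y ∘ₗ LinearMap.mulLeft ℚ X
    + LinearMap.mulLeft ℚ X ∘ₗ Dh - LinearMap.mulLeft ℚ X ∘ₗ LinearMap.mulLeft ℚ Y) (fun l => ?_) hv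
  simp only [LinearMap.comp_apply, LinearMap.mulLeft_apply, LinearMap.add_apply,
    LinearMap.sub_apply]
  rw [← wd_xc, Dh, lext_wd, lext_wd, toZ_ofList, toZ_ofList, tz_x, wd_xc, ← wz_tz]
  obtain ⟨m, ks, h, hm⟩ := tz_cons l
  rw [h, headAdd, harmW_cons, harmW_cons, wz_cons, wz_cons, z_succ (k := 1 + m) (by omega),
    z_succ hm]
  noncomm_ring

lemma Dnh_X {v : H} (hv : v ∈ Hy) : Dnh (X * v) = Y * (X * v) + X * Dnh v - X * (Y * v) := by
  refine eq_on_Hy (Dnh ∘ₗ LinearMap.mulLeft ℚ X) (LinearMap.mulLeft ℚ Y ∘ₗ LinearMap.mulLeft ℚ X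
    + LinearMap.mulLeft ℚ X ∘ₗ Dnh - LinearMap.mulLeft ℚ X ∘ₗ LinearMap.mulLeft ℚ Y) (fun l => ?_) hv
  simp only [LinearMap.comp_apply, LinearMap.mulLeft_apply, LinearMap.add_apply,
    LinearMap.sub_apply]
  rw [← wd_xc, Dnh, lext_wd, lext_wd, toZ_ofList, toZ_ofList, tz_x, wd_xc, ← wz_tz]
  obtain ⟨m, ks, h, hm⟩ := tz_cons l
  rw [h, headAdd, nharmW_cons, nharmW_cons, wz_cons, wz_cons, z_succ (k := 1 + m) (by omega),
    z_succ hm]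
  noncomm_ring

lemma z_two : z (1 + 1) = X * Y := by rw [z_succ le_rfl, z_one]

lemma Dh_Y {v : H} (hv : v ∈ H1) : Dh (Y * v) = Y * (Y * v) + Y * Dh v + X * (Y * v) := by
  refine eq_on_H1 (Dh ∘ₗ LinearMap.mulLeft ℚ Y) (LinearMap.mulLeft ℚ Y ∘ₗ LinearMap.mulLeft ℚ Y
    + LinearMap.mulLeft ℚ Y ∘ₗ Dh + LinearMap.mulLeft ℚ X ∘ₗ LinearMap.mulLeft ℚ Y)
    ?_ (fun l => ?_) hv <;>
  simp only [LinearMap.comp_apply, LinearMap.mulLeft_apply, LinearMap.add_apply,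
    LinearMap.sub_apply]
  · rw [← wd_nil, ← wd_yc, Dh, lext_wd, lext_wd, toZ_ofList, toZ_ofList, tz_y]
    change harmW [1] [1] = Y * Y + Y * harmW [1] [] + X * Y
    rw [harmW_cons, wz_cons, wz_nil, z_one, z_two]
    noncomm_ring
  · rw [← wd_yc, Dh, lext_wd, lext_wd, toZ_ofList, toZ_ofList, tz_y, wd_yc, ← wz_tz]
    rw [harmW_cons, wz_cons, z_one, z_two]
    noncomm_ring

lemma Dnh_Y {v : H} (hv : v ∈ H1) : Dnh (Y * v) = Y * (Y * v) + Y * Dnh v - X * (Y * v) := by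
  refine eq_on_H1 (Dnh ∘ₗ LinearMap.mulLeft ℚ Y) (LinearMap.mulLeft ℚ Y ∘ₗ LinearMap.mulLeft ℚ Y
    + LinearMap.mulLeft ℚ Y ∘ₗ Dnh - LinearMap.mulLeft ℚ X ∘ₗ LinearMap.mulLeft ℚ Y)
    ?_ (fun l => ?_) hv <;>
  simp only [LinearMap.comp_apply, LinearMap.mulLeft_apply, LinearMap.add_apply,
    LinearMap.sub_apply]
  · rw [← wd_nil, ← wd_yc, Dnh, lext_wd, lext_wd, toZ_ofList, toZ_ofList, tz_y]
    change nharmW [1] [1] = Y * Y + Y * nharmW [1] [] - X * Y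
    rw [nharmW_cons, wz_cons, wz_nil, z_one, z_two]
    noncomm_ring
  · rw [← wd_yc, Dnh, lext_wd, lext_wd, toZ_ofList, toZ_ofList, tz_y, wd_yc, ← wz_tz]
    rw [nharmW_cons, wz_cons, z_one, z_two]
    noncomm_ring

lemma Ds_one : Ds 1 = Y := by
  rw [← wd_nil, Ds, lext_wd, FreeMonoid.toList_ofList, shW]; rfl
lemma Dns_one : Dns 1 = Y := by
  rw [← wd_nil, Dns, lext_wd, FreeMonoid.toList_ofList, nshW]; rfl

lemma Ds_cons (u : Letter) (l : List Letter) :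
    Ds (wd (u :: l)) = Y * wd (u :: l) + wd [u] * Ds (wd l) := by
  rw [Ds, lext_wd, lext_wd, FreeMonoid.toList_ofList, FreeMonoid.toList_ofList, shW, shW]; rfl

lemma Dns_cons (u : Letter) (l : List Letter) (h : l ≠ []) :
    Dns (wd (u :: l)) = Y * wd (u :: l) + wd [u] * Dns (wd l) - X * wd (u :: l) := by
  rw [Dns, lext_wd, lext_wd, FreeMonoid.toList_ofList, FreeMonoid.toList_ofList, nshW, nshW]
  cases l with
  | nil => exact absurd rfl h
  | cons a l =>
    simp only [δ, one_smul, zero_smul, sub_zero]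
    rw [← wd_xc]; rfl

lemma Ds_X (v : H) : Ds (X * v) = Y * (X * v) + X * Ds v := by
  refine mem_of_words (LinearMap.eqLocus (Ds ∘ₗ LinearMap.mulLeft ℚ X)
    (LinearMap.mulLeft ℚ Y ∘ₗ LinearMap.mulLeft ℚ X + LinearMap.mulLeft ℚ X ∘ₗ Ds))
    (fun l => ?_) v
  change Ds (X * wd l) = Y * (X * wd l) + X * Ds (wd l)
  rw [← wd_xc, Ds_cons, wd_x]

lemma Ds_Y (v : H) : Ds (Y * v) = Y * (Y * v) + Y * Ds v := by
  refine mem_of_words (LinearMap.eqLocus (Ds ∘ₗ LinearMap.mulLeft ℚ Y)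
    (LinearMap.mulLeft ℚ Y ∘ₗ LinearMap.mulLeft ℚ Y + LinearMap.mulLeft ℚ Y ∘ₗ Ds))
    (fun l => ?_) v
  change Ds (Y * wd l) = Y * (Y * wd l) + Y * Ds (wd l)
  rw [← wd_yc, Ds_cons, wd_y]

lemma Dns_X {v : H} (hv : v ∈ Hy) : Dns (X * v) = Y * (X * v) + X * Dns v - X * (X * v) := by
  refine eq_on_Hy (Dns ∘ₗ LinearMap.mulLeft ℚ X) (LinearMap.mulLeft ℚ Y ∘ₗ LinearMap.mulLeft ℚ X
    + LinearMap.mulLeft ℚ X ∘ₗ Dns - LinearMap.mulLeft ℚ X ∘ₗ LinearMap.mulLeft ℚ X) (fun l => ?_) hv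
  simp only [LinearMap.comp_apply, LinearMap.mulLeft_apply, LinearMap.add_apply,
    LinearMap.sub_apply]
  rw [← wd_xc, Dns_cons _ _ (by simp), wd_x]

lemma Dns_Y {v : H} (hv : v ∈ Hy) : Dns (Y * v) = Y * (Y * v) + Y * Dns v - X * (Y * v) := by
  refine eq_on_Hy (Dns ∘ₗ LinearMap.mulLeft ℚ Y) (LinearMap.mulLeft ℚ Y ∘ₗ LinearMap.mulLeft ℚ Y
    + LinearMap.mulLeft ℚ Y ∘ₗ Dns - LinearMap.mulLeft ℚ X ∘ₗ LinearMap.mulLeft ℚ Y) (fun l => ?_) hv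
  simp only [LinearMap.comp_apply, LinearMap.mulLeft_apply, LinearMap.add_apply,
    LinearMap.sub_apply]
  rw [← wd_yc, Dns_cons _ _ (by simp), wd_y]

lemma Dns_YY : Dns Y = Y * Y + Y * Y - X * Y - X * Y := by
  rw [← wd_y, Dns, lext_wd, FreeMonoid.toList_ofList, nshW, nshW, nshW]
  simp only [δ, one_smul, τ]
  rw [← wd_x, ← wd_append [Letter.x]]; rfl

/-! ### Compatibility of `S` with multiplication by `y` -/

/-- Induction on words ending in `y`, for submodules. -/
lemma Hy_induction (p : Submodule ℚ H) (hY : Y ∈ p) (hx : ∀ v ∈ Hy, v ∈ p → X * v ∈ p)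
    (hy : ∀ v ∈ Hy, v ∈ p → Y * v ∈ p) : Hy ≤ p := by
  refine Hy_le p fun l => ?_
  induction l with
  | nil => exact hY
  | cons u l ih =>
    cases u with
    | x => rw [List.cons_append, wd_xc]; exact hx _ (wd_mem_Hy l) ih
    | y => rw [List.cons_append, wd_yc]; exact hy _ (wd_mem_Hy l) ih

lemma Dnh_mem {v : H} (hv : v ∈ Hy) : Dnh v ∈ Hy := by
  refine Hy_induction (Hy.comap Dnh) ?_ ?_ ?_ hv
  · rw [Submodule.mem_comap, ← mul_one Y, Dnh_Y one_mem_H1, mul_one, Dnh_one]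
    exact sub_mem (add_mem (mem_Hy _) (mem_Hy _)) (mem_Hy _)
  · intro v hv h
    rw [Submodule.mem_comap, Dnh_X hv]
    exact sub_mem (add_mem (mul_mem_Hy _ (mul_mem_Hy _ hv)) (mul_mem_Hy _ h))
      (mul_mem_Hy _ (mul_mem_Hy _ hv))
  · intro v hv h
    rw [Submodule.mem_comap, Dnh_Y (Hy_le_H1 hv)]
    exact sub_mem (add_mem (mul_mem_Hy _ (mul_mem_Hy _ hv)) (mul_mem_Hy _ h))
      (mul_mem_Hy _ (mul_mem_Hy _ hv))

lemma Dns_mem {v : H} (hv : v ∈ Hy) : Dns v ∈ Hy := by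
  refine Hy_induction (Hy.comap Dns) ?_ ?_ ?_ hv
  · rw [Submodule.mem_comap, Dns_YY]
    exact sub_mem (sub_mem (add_mem (mem_Hy _) (mem_Hy _)) (mem_Hy _)) (mem_Hy _)
  · intro v hv h
    rw [Submodule.mem_comap, Dns_X hv]
    exact sub_mem (add_mem (mul_mem_Hy _ (mul_mem_Hy _ hv)) (mul_mem_Hy _ h))
      (mul_mem_Hy _ (mul_mem_Hy _ hv))
  · intro v hv h
    rw [Submodule.mem_comap, Dns_Y hv]
    exact sub_mem (add_mem (mul_mem_Hy _ (mul_mem_Hy _ hv)) (mul_mem_Hy _ h))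
      (mul_mem_Hy _ (mul_mem_Hy _ hv))

lemma Sl_Dnh_Hy {v : H} (hv : v ∈ Hy) : Sl (Dnh v) = Dh (Sl v) := by
  refine Hy_induction (LinearMap.eqLocus (Sl ∘ₗ Dnh) (Dh ∘ₗ Sl)) ?_ ?_ ?_ hv
  · change Sl (Dnh Y) = Dh (Sl Y)
    have h1 := Dnh_Y one_mem_H1
    have h2 := Dh_Y one_mem_H1
    rw [mul_one, Dnh_one] at h1
    rw [mul_one, Dh_one] at h2
    rw [Sl_Y, h1, h2, map_sub, map_add, Sl_Y_mul Y_mem_Hy, Sl_X_mul Y_mem_Hy, Sl_Y]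
    noncomm_ring
  · intro v hv h
    change Sl (Dnh v) = Dh (Sl v) at h
    change Sl (Dnh (X * v)) = Dh (Sl (X * v))
    rw [Dnh_X hv, Sl_X_mul hv, Dh_X (Sl_mem_Hy hv), map_sub, map_add,
      Sl_Y_mul (mul_mem_Hy _ hv), Sl_X_mul hv, Sl_X_mul (Dnh_mem hv),
      Sl_X_mul (mul_mem_Hy _ hv), Sl_Y_mul hv, h]
    noncomm_ring
  · intro v hv h
    change Sl (Dnh v) = Dh (Sl v) at h
    change Sl (Dnh (Y * v)) = Dh (Sl (Y * v))
    rw [Dnh_Y (Hy_le_H1 hv), Sl_Y_mul hv, add_mul, map_add, Dh_X (Sl_mem_Hy hv),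
      Dh_Y (Hy_le_H1 (Sl_mem_Hy hv)), map_sub, map_add,
      Sl_Y_mul (mul_mem_Hy _ hv), Sl_Y_mul hv, Sl_Y_mul (Dnh_mem hv),
      Sl_X_mul (mul_mem_Hy _ hv), Sl_Y_mul hv, h]
    noncomm_ring

lemma Sl_Dns_Hy {v : H} (hv : v ∈ Hy) : Sl (Dns v) = Ds (Sl v) := by
  refine Hy_induction (LinearMap.eqLocus (Sl ∘ₗ Dns) (Ds ∘ₗ Sl)) ?_ ?_ ?_ hv
  · change Sl (Dns Y) = Ds (Sl Y)
    have h2 := Ds_Y 1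
    rw [mul_one, Ds_one] at h2
    rw [Sl_Y, Dns_YY, h2, map_sub, map_sub, map_add, Sl_Y_mul Y_mem_Hy, Sl_X_mul Y_mem_Hy, Sl_Y]
    noncomm_ring
  · intro v hv h
    change Sl (Dns v) = Ds (Sl v) at h
    change Sl (Dns (X * v)) = Ds (Sl (X * v))
    rw [Dns_X hv, Sl_X_mul hv, Ds_X, map_sub, map_add,
      Sl_Y_mul (mul_mem_Hy _ hv), Sl_X_mul hv, Sl_X_mul (Dns_mem hv),
      Sl_X_mul (mul_mem_Hy _ hv), Sl_X_mul hv, h]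
    noncomm_ring
  · intro v hv h
    change Sl (Dns v) = Ds (Sl v) at h
    change Sl (Dns (Y * v)) = Ds (Sl (Y * v))
    rw [Dns_Y hv, Sl_Y_mul hv, add_mul, map_add, Ds_X,
      Ds_Y, map_sub, map_add,
      Sl_Y_mul (mul_mem_Hy _ hv), Sl_Y_mul hv, Sl_Y_mul (Dns_mem hv),
      Sl_X_mul (mul_mem_Hy _ hv), Sl_Y_mul hv, h]
    noncomm_ring

lemma Sl_Dnh {v : H} (hv : v ∈ H1) : Sl (Dnh v) = Dh (Sl v) := by
  refine eq_on_H1 (Sl ∘ₗ Dnh) (Dh ∘ₗ Sl) ?_ (fun l => Sl_Dnh_Hy (wd_mem_Hy l)) hv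
  simp [Dnh_one, Sl_one, Dh_one, Sl_Y]

lemma Sl_Dns {v : H} (hv : v ∈ H1) : Sl (Dns v) = Ds (Sl v) := by
  refine eq_on_H1 (Sl ∘ₗ Dns) (Ds ∘ₗ Sl) ?_ (fun l => Sl_Dns_Hy (wd_mem_Hy l)) hv
  simp [Dns_one, Sl_one, Ds_one, Sl_Y]

/-! ### Uniqueness of the regularization -/

noncomputable def Fil (n : ℕ) : Submodule ℚ H :=
  Submodule.span ℚ {b | ∃ j ≤ n, ∃ a ∈ H0, b = Y ^ j * a}

lemma Fil_H0 (n : ℕ) : H0 ≤ Fil n := fun a ha =>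
  Submodule.subset_span ⟨0, Nat.zero_le _, a, ha, by simp⟩

lemma Fil_Y {n : ℕ} {b : H} (hb : b ∈ Fil n) : Y * b ∈ Fil (n + 1) := by
  have : Fil n ≤ (Fil (n + 1)).comap (LinearMap.mulLeft ℚ Y) := by
    refine Submodule.span_le.2 ?_
    rintro _ ⟨j, hj, a, ha, rfl⟩
    exact Submodule.subset_span ⟨j + 1, by omega, a, ha, by simp [pow_succ', mul_assoc]⟩
  exact this hb

lemma exists_Fil : ∀ l : List Letter, ∃ n, wd (l ++ [Letter.y]) ∈ Fil n
  | [] => ⟨1, Submodule.subset_span ⟨1, le_rfl, 1, one_mem_H0, by simp [wd_y]⟩⟩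
  | Letter.x :: l => ⟨0, Fil_H0 _ (by
      rw [List.cons_append, wd_xc]; exact X_mul_mem_H0 (wd_mem_Hy l))⟩
  | Letter.y :: l => by
    obtain ⟨n, hn⟩ := exists_Fil l
    exact ⟨n + 1, by rw [List.cons_append, wd_yc]; exact Fil_Y hn⟩

lemma Ypow_mem {a : H} (ha : a ∈ H0) : ∀ n, Y ^ n * a ∈ H1
  | 0 => by simpa using H0_le_H1 ha
  | n + 1 => by
    rw [pow_succ', mul_assoc]; exact Hy_le_H1 (Y_mul_mem_Hy (Ypow_mem ha n))

lemma uniq (D : H →ₗ[ℚ] H) (g h : H →ₗ[ℚ] Polynomial ℝ) (hD1 : D 1 = Y)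
    (hDx : ∀ v ∈ Hy, D (X * v) - Y * (X * v) ∈ H0)
    (hDy : ∀ v ∈ H1, D (Y * v) - Y * (Y * v) - Y * D v ∈ H0)
    (hg : ∀ a ∈ H1, g (D a) = Polynomial.X * g a)
    (hh : ∀ a ∈ H1, h (D a) = Polynomial.X * h a)
    (h0 : ∀ a ∈ H0, g a = h a) : ∀ a ∈ H1, g a = h a := by
  have base : ∀ a ∈ H0, D a - Y * a ∈ H0 := by
    intro a ha
    refine H0_le (H0.comap (D - LinearMap.mulLeft ℚ Y)) ?_ ?_ ha
    · simp [hD1]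
    · intro v hv; exact hDx v hv
  have claim : ∀ n : ℕ, ∀ a ∈ H0, D (Y ^ n * a) - ((n : ℚ) + 1) • (Y ^ (n + 1) * a) ∈ Fil n := by
    intro n a ha
    induction n with
    | zero => simpa using Fil_H0 0 (base a ha)
    | succ n ih =>
      have h1 := Fil_H0 (n + 1) (hDy _ (Ypow_mem ha n))
      have h2 := Fil_Y ih
      have h3 := add_mem h1 h2
      convert h3 using 1
      push_cast
      rw [pow_succ' Y (n + 1), pow_succ' Y n, mul_sub, mul_smul_comm, add_smul _ (1 : ℚ), one_smul]
      simp only [mul_assoc]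
      abel
  have key : ∀ n, ∀ b ∈ Fil n, g b = h b := by
    intro n
    induction n with
    | zero =>
      intro b hb
      refine (Submodule.span_le (p := LinearMap.eqLocus g h)).2 ?_ hb
      rintro _ ⟨j, hj, a, ha, rfl⟩
      obtain rfl : j = 0 := by omega
      simpa using h0 a ha
    | succ n ih =>
      intro b hb
      refine (Submodule.span_le (p := LinearMap.eqLocus g h)).2 ?_ hb
      rintro _ ⟨j, hj, a, ha, rfl⟩
      change g _ = h _
      rcases Nat.lt_or_ge n j with hj' | hj'
      · obtain rfl : j = n + 1 := by omega
        have h1 := ih _ (claim n a ha)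
        have h2 := ih (Y ^ n * a) (Submodule.subset_span ⟨n, le_rfl, a, ha, rfl⟩)
        rw [map_sub, map_sub, hg _ (Ypow_mem ha n), hh _ (Ypow_mem ha n), h2, map_smul, map_smul,
          sub_right_inj] at h1
        exact smul_right_injective _ (by positivity : ((n : ℚ) + 1) ≠ 0) h1
      · exact ih _ (Submodule.subset_span ⟨j, hj', a, ha, rfl⟩)
  intro a ha
  refine eq_on_H1 g h (h0 1 one_mem_H0) (fun l => ?_) ha
  obtain ⟨n, hn⟩ := exists_Fil l
  exact key n _ hn

end RegCompat

open RegCompat in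
/-- Compatibility of the regularization maps with `S`:
`Z̄^{*̄} = Z^{*} ∘ S` and `Z̄^{ш̄} = Z^{ш} ∘ S` on `H¹`, where `Z^{*}`, `Z^{ш}`
are the regularized evaluation maps extending `Z` and `Z̄^{*̄}`, `Z̄^{ш̄}` those
extending `Z̄`, all sending `y` to `T`. -/
theorem reg_homs_compat_S
    (fstar fsh gstar gsh : H →ₗ[ℚ] Polynomial ℝ)
    (hfstar : IsRegHom harm Z fstar) (hfsh : IsRegHom sh Z fsh)
    (hgstar : IsRegHom nharm Zbar gstar) (hgsh : IsRegHom nsh Zbar gsh) :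
    ∀ a ∈ H1, gstar a = fstar (S a) ∧ gsh a = fsh (S a) := by
  have hY : Y ∈ H1 := Hy_le_H1 Y_mem_Hy
  intro a ha
  constructor
  · refine uniq Dnh gstar (fstar ∘ₗ Sl) Dnh_one ?_ ?_ ?_ ?_ ?_ a ha
    · intro v hv
      rw [Dnh_X hv]
      have := sub_mem (X_mul_mem_H0 (Dnh_mem hv)) (X_mul_mem_H0 (mul_mem_Hy Y hv))
      convert this using 1
      abel
    · intro v hv
      rw [Dnh_Y hv]
      have := neg_mem (X_mul_mem_H0 (Y_mul_mem_Hy hv))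
      convert this using 1
      abel
    · intro a ha
      rw [← nharm_Y, hgstar.1 _ hY _ ha, hgstar.2.2]
    · intro a ha
      rw [LinearMap.comp_apply, Sl_Dnh ha, ← harm_Y, hfstar.1 _ hY _ (Sl_mem_H1 ha), hfstar.2.2]
      rfl
    · intro a ha
      rw [hgstar.2.1 a ha, Zbar_S ha, LinearMap.comp_apply, hfstar.2.1 _ (Sl_mem_H0 ha)]
      rfl
  · refine uniq Dns gsh (fsh ∘ₗ Sl) Dns_one ?_ ?_ ?_ ?_ ?_ a ha
    · intro v hv
      rw [Dns_X hv]
      have := sub_mem (X_mul_mem_H0 (Dns_mem hv)) (X_mul_mem_H0 (mul_mem_Hy X hv))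
      convert this using 1
      abel
    · intro v hv
      refine H1_le (H0.comap (Dns ∘ₗ LinearMap.mulLeft ℚ Y
        - LinearMap.mulLeft ℚ Y ∘ₗ LinearMap.mulLeft ℚ Y - LinearMap.mulLeft ℚ Y ∘ₗ Dns))
        ?_ (fun l => ?_) hv
      · change Dns (Y * 1) - Y * (Y * 1) - Y * Dns 1 ∈ H0
        rw [mul_one, Dns_YY, Dns_one]
        have := neg_mem (add_mem (X_mul_mem_H0 Y_mem_Hy) (X_mul_mem_H0 Y_mem_Hy))
        convert this using 1
        abel
      · change Dns (Y * wd (l ++ [Letter.y])) - Y * (Y * wd (l ++ [Letter.y]))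
          - Y * Dns (wd (l ++ [Letter.y])) ∈ H0
        rw [Dns_Y (wd_mem_Hy l)]
        have := neg_mem (X_mul_mem_H0 (mul_mem_Hy Y (wd_mem_Hy l)))
        convert this using 1
        abel
    · intro a ha
      rw [← nsh_Y, hgsh.1 _ hY _ ha, hgsh.2.2]
    · intro a ha
      rw [LinearMap.comp_apply, Sl_Dns ha, ← sh_Y, hfsh.1 _ hY _ (Sl_mem_H1 ha), hfsh.2.2]
      rfl
    · intro a ha
      rw [hgsh.2.1 a ha, Zbar_S ha, LinearMap.comp_apply, hfsh.2.1 _ (Sl_mem_H0 ha)]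
      rfl
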